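/- Fractional Schrödinger system symmetry: Let α ∈ (0,2), and let (u,v) ∈ (L_α ∩ C^{1,1}_{loc}(ℝ^n))² be a positive solution of (−Δ)^{α/2}u = Σ_{i=1}^N u^{p_i}v^{q_i}, (−Δ)^{α/2}v = Σ_{i=1}^N u^{r_i}v^{s_i}, where p_i, q_i, r_i, s_i ≥ 1. Set p = min p_i, q = min q_i, r = min r_i, s = min s_i. If u(x) ≲ |x|^{−a}, v(x) ≲ |x|^{−b} as |x| → ∞ with a, b > 0 and α < min{ap+bq−a, ap+bq−b, ar+bs−a, ar+bs−b}, then u and v are radially symmetric about a common point x₀ ∈ ℝ^n. -/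

import Mathlib

open Set MeasureTheory Filter

/-- `F x` is the value of the principal-value fractional Laplacian
`(−Δ)^{α/2} u` (with normalizing constant `C`) at every point `x`. -/
def IsFracLap (n : ℕ) (α C : ℝ) (u F : EuclideanSpace ℝ (Fin n) → ℝ) : Prop :=
  ∀ x, Tendsto
    (fun ε : ℝ => C * ∫ y in {y : EuclideanSpace ℝ (Fin n) | ε ≤ dist x y},
      (u x - u y) / dist x y ^ ((n : ℝ) + α))
    (nhdsWithin 0 (Ioi 0)) (nhds (F x))

/-- Membership in the space `L_α`. -/
def MemLalpha (n : ℕ) (α : ℝ) (u : EuclideanSpace ℝ (Fin n) → ℝ) : Prop :=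
  Integrable (fun x : EuclideanSpace ℝ (Fin n) => |u x| / (1 + ‖x‖ ^ ((n : ℝ) + α)))

/-- `C^{1,1}_{loc}` regularity: `C¹` with locally Lipschitz derivative. -/
def C11loc {n : ℕ} (u : EuclideanSpace ℝ (Fin n) → ℝ) : Prop :=
  ContDiff ℝ 1 u ∧ LocallyLipschitz (fderiv ℝ u)

/-!
Method of moving planes. For a unit vector `e` and `l : ℝ`, let `w = u ∘ R - u` be the difference of
`u` and its reflection in the hyperplane `⟪e, x⟫ = l`; it is antisymmetric and vanishes at infinity.

Folding the singular integral for `(-Δ)^{α/2} w` onto the half-space `⟪e, y⟫ < l` shows that, at a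
nonpositive minimum `x` of `w` on the half-space, `(-Δ)^{α/2} w (x) (l - ⟪e, x⟫)^α ≤ c w(x)` with
`c > 0`, and that `w` vanishes identically if moreover `w x = 0` and `(-Δ)^{α/2} w (x) ≥ 0`.
Let `w` be the smaller, at its minimum, of the differences of `u` and `v`. The equations bound
`(-Δ)^{α/2} w (x)` below by `K(x) w(x)`, where `K(x) |x|^α → 0` by the decay of `u` and `v`; so
`c ≤ K(x) (l - ⟪e, x⟫)^α` at every negative minimum, and negative minima stay in a bounded set as
long as `l` is bounded above.

Hence there are none for `l` near `-∞`, while `u > 0 = u(∞)` forces some for large `l`. At the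
first `l` beyond which they occur, a limit of minima is a touching point in the open half-space, so
`u` and `v` are symmetric in that hyperplane. This holds in every direction, and all these
hyperplanes pass through the barycentre of a compact superlevel set of `u`, which is therefore the
centre.
-/

noncomputable section

open Bornology Metric Topology
open scoped RealInnerProductSpace

section Reflection

variable {E : Type*} [NormedAddCommGroup E] [InnerProductSpace ℝ E] {e : E} {l : ℝ} {x y : E}

/-- The reflection across the hyperplane `{x | ⟪e, x⟫ = l}`, for a unit vector `e`; in the paper's
notation it sends `x` to `x^λ`. -/
def hyperplaneReflection (e : E) (l : ℝ) : E ≃ᵃⁱ[ℝ] E :=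
  (ℝ ∙ e)ᗮ.reflection.toAffineIsometryEquiv.trans (AffineIsometryEquiv.constVAdd ℝ E ((2 * l) • e))

lemma hyperplaneReflection_eq_reflection_add (e : E) (l : ℝ) (x : E) :
    hyperplaneReflection e l x = (ℝ ∙ e)ᗮ.reflection x + (2 * l) • e := by
  simp [hyperplaneReflection, add_comm]

lemma hyperplaneReflection_apply (he : ‖e‖ = 1) (l : ℝ) (x : E) :
    hyperplaneReflection e l x = x + (2 * (l - ⟪e, x⟫)) • e := by
  rw [hyperplaneReflection_eq_reflection_add, Submodule.reflection_orthogonal_apply,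
    Submodule.reflection_singleton_apply]
  simp only [he, RCLike.ofReal_real_eq_id, id_eq, one_pow, div_one]
  module

@[simp]
lemma hyperplaneReflection_hyperplaneReflection (e : E) (l : ℝ) (x : E) :
    hyperplaneReflection e l (hyperplaneReflection e l x) = x := by
  simp [hyperplaneReflection_eq_reflection_add,
    Submodule.reflection_orthogonalComplement_singleton_eq_neg]

lemma inner_hyperplaneReflection (he : ‖e‖ = 1) (l : ℝ) (x : E) :
    ⟪e, hyperplaneReflection e l x⟫ = 2 * l - ⟪e, x⟫ := by
  rw [hyperplaneReflection_apply he, inner_add_right, inner_smul_right, real_inner_self_eq_norm_sq,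
    he]
  ring

lemma hyperplaneReflection_eq_self (he : ‖e‖ = 1) (hx : ⟪e, x⟫ = l) :
    hyperplaneReflection e l x = x := by
  simp [hyperplaneReflection_apply he, hx]

lemma hyperplaneReflection_ne_self (he : ‖e‖ = 1) (hx : ⟪e, x⟫ < l) :
    hyperplaneReflection e l x ≠ x := fun h ↦ by
  have := inner_hyperplaneReflection he l x
  rw [h] at this
  linarith

lemma hyperplaneReflection_zero (e : E) (l : ℝ) : hyperplaneReflection e l 0 = (2 * l) • e := by
  simp [hyperplaneReflection_eq_reflection_add]

lemma dist_hyperplaneReflection_sq (he : ‖e‖ = 1) (l : ℝ) (x y : E) :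
    dist x (hyperplaneReflection e l y) ^ 2 =
      dist x y ^ 2 + 4 * (l - ⟪e, x⟫) * (l - ⟪e, y⟫) := by
  rw [hyperplaneReflection_apply he, dist_eq_norm, dist_eq_norm, ← sub_sub, norm_sub_sq_real,
    inner_smul_right, norm_smul, he, inner_sub_left, real_inner_comm e x, real_inner_comm e y,
    mul_one, Real.norm_eq_abs, sq_abs]
  ring

lemma dist_hyperplaneReflection_left (e : E) (l : ℝ) (x y : E) :
    dist (hyperplaneReflection e l x) y = dist x (hyperplaneReflection e l y) := by
  rw [← (hyperplaneReflection e l).dist_map, hyperplaneReflection_hyperplaneReflection]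

lemma preimage_hyperplaneReflection_compl_ball_union_ball (e : E) (l : ℝ) (x : E) (ε : ℝ) :
    hyperplaneReflection e l ⁻¹' (ball x ε ∪ ball (hyperplaneReflection e l x) ε)ᶜ =
      (ball x ε ∪ ball (hyperplaneReflection e l x) ε)ᶜ := by
  ext y
  simp [dist_hyperplaneReflection_left, and_comm]

lemma dist_le_dist_hyperplaneReflection (he : ‖e‖ = 1) (hx : ⟪e, x⟫ ≤ l) (hy : ⟪e, y⟫ ≤ l) :
    dist x y ≤ dist x (hyperplaneReflection e l y) := by
  refine le_of_pow_le_pow_left₀ two_ne_zero dist_nonneg ?_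
  rw [dist_hyperplaneReflection_sq he]
  nlinarith [mul_nonneg (sub_nonneg.2 hx) (sub_nonneg.2 hy)]

lemma dist_lt_dist_hyperplaneReflection (he : ‖e‖ = 1) (hx : ⟪e, x⟫ < l) (hy : ⟪e, y⟫ < l) :
    dist x y < dist x (hyperplaneReflection e l y) := by
  refine lt_of_pow_lt_pow_left₀ 2 dist_nonneg ?_
  rw [dist_hyperplaneReflection_sq he]
  nlinarith [mul_pos (sub_pos.2 hx) (sub_pos.2 hy)]

lemma continuous_uncurry_hyperplaneReflection (he : ‖e‖ = 1) :
    Continuous fun z : ℝ × E ↦ hyperplaneReflection e z.1 z.2 := by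
  simp only [hyperplaneReflection_apply he]
  fun_prop

lemma tendsto_hyperplaneReflection_cocompact (e : E) (l : ℝ) :
    Tendsto (hyperplaneReflection e l) (cocompact E) (cocompact E) :=
  (hyperplaneReflection e l).toHomeomorph.isClosedEmbedding.tendsto_cocompact

lemma abs_inner_le_norm_of_norm_eq_one (he : ‖e‖ = 1) (x : E) : |⟪e, x⟫| ≤ ‖x‖ := by
  simpa [he] using abs_real_inner_le_norm e x

lemma exists_hyperplaneReflection_eq {x₀ : E} (hne : x ≠ y) (h : ‖x - x₀‖ = ‖y - x₀‖) :
    ∃ e : E, ‖e‖ = 1 ∧ hyperplaneReflection e ⟪e, x₀⟫ x = y := by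
  have hxy : ‖x - y‖ ≠ 0 := norm_ne_zero_iff.2 (sub_ne_zero.2 hne)
  set e : E := ‖x - y‖⁻¹ • (x - y)
  have he : ‖e‖ = 1 := norm_smul_inv_norm (sub_ne_zero.2 hne)
  have hspan : (ℝ ∙ e) = ℝ ∙ ((x - x₀) - (y - x₀)) := by
    rw [sub_sub_sub_cancel_right]
    exact Submodule.span_singleton_smul_eq (IsUnit.mk0 _ (inv_ne_zero hxy)) _
  have hswap : (ℝ ∙ e)ᗮ.reflection (x - x₀) = y - x₀ := by
    simp only [hspan, Submodule.reflection_sub h]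
  refine ⟨e, he, ?_⟩
  calc hyperplaneReflection e ⟪e, x₀⟫ x
      = (ℝ ∙ e)ᗮ.reflection (x - x₀) + hyperplaneReflection e ⟪e, x₀⟫ x₀ := by
        rw [hyperplaneReflection_eq_reflection_add, hyperplaneReflection_eq_reflection_add, map_sub]
        abel
    _ = y := by rw [hswap, hyperplaneReflection_eq_self he rfl, sub_add_cancel]

/-- The paper's `w_λ(x) = u(x^λ) - u(x)`. -/
def reflectionDiff (e : E) (l : ℝ) (u : E → ℝ) (x : E) : ℝ :=
  u (hyperplaneReflection e l x) - u x

lemma reflectionDiff_hyperplaneReflection (e : E) (l : ℝ) (u : E → ℝ) (x : E) :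
    reflectionDiff e l u (hyperplaneReflection e l x) = -reflectionDiff e l u x := by
  simp [reflectionDiff]

lemma reflectionDiff_eq_zero_of_inner_eq (he : ‖e‖ = 1) (u : E → ℝ) (hx : ⟪e, x⟫ = l) :
    reflectionDiff e l u x = 0 := by
  rw [reflectionDiff, hyperplaneReflection_eq_self he hx, sub_self]

lemma continuous_uncurry_reflectionDiff (he : ‖e‖ = 1) {u : E → ℝ} (hu : Continuous u) :
    Continuous fun z : ℝ × E ↦ reflectionDiff e z.1 u z.2 :=
  (hu.comp (continuous_uncurry_hyperplaneReflection he)).sub (hu.comp continuous_snd)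

lemma continuous_reflectionDiff {u : E → ℝ} (hu : Continuous u) (e : E) (l : ℝ) :
    Continuous (reflectionDiff e l u) :=
  (hu.comp (hyperplaneReflection e l).continuous).sub hu

lemma tendsto_reflectionDiff_cocompact {u : E → ℝ} (hu : Tendsto u (cocompact E) (𝓝 0)) (e : E)
    (l : ℝ) : Tendsto (reflectionDiff e l u) (cocompact E) (𝓝 0) := by
  simpa [reflectionDiff] using! (hu.comp (tendsto_hyperplaneReflection_cocompact e l)).sub hu

lemma comp_hyperplaneReflection_eq_of_reflectionDiff_eq_zero (he : ‖e‖ = 1) {u : E → ℝ}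
    (h : ∀ y, ⟪e, y⟫ < l → reflectionDiff e l u y = 0) : u ∘ hyperplaneReflection e l = u := by
  suffices ∀ x, reflectionDiff e l u x = 0 from funext fun x ↦ sub_eq_zero.1 (this x)
  intro x
  rcases lt_trichotomy ⟪e, x⟫ l with hx | hx | hx
  · exact h x hx
  · exact reflectionDiff_eq_zero_of_inner_eq he u hx
  · have := h (hyperplaneReflection e l x) (by rw [inner_hyperplaneReflection he]; linarith)
    rwa [reflectionDiff_hyperplaneReflection, neg_eq_zero] at this

end Reflection

section Center

variable {E : Type*} [NormedAddCommGroup E] [InnerProductSpace ℝ E] [MeasurableSpace E]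
  [BorelSpace E] {e : E} {l : ℝ}

lemma measurableEmbedding_hyperplaneReflection (e : E) (l : ℝ) :
    MeasurableEmbedding (hyperplaneReflection e l) :=
  (hyperplaneReflection e l).toHomeomorph.measurableEmbedding

variable [FiniteDimensional ℝ E]

lemma measurePreserving_hyperplaneReflection (e : E) (l : ℝ) :
    MeasurePreserving (hyperplaneReflection e l) := by
  have h : ⇑(hyperplaneReflection e l) = (· + (2 * l) • e) ∘ (ℝ ∙ e)ᗮ.reflection :=
    funext (hyperplaneReflection_eq_reflection_add e l)
  rw [h]
  exact (measurePreserving_add_right _ _).comp (LinearIsometryEquiv.measurePreserving _)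

lemma inner_average_eq_of_preimage_hyperplaneReflection_eq (he : ‖e‖ = 1) {K : Set E}
    (hK : IntegrableOn id K) (hK₀ : volume K ≠ 0) (hK₁ : volume K ≠ ⊤)
    (hR : hyperplaneReflection e l ⁻¹' K = K) : ⟪e, ⨍ y in K, y⟫ = l := by
  have : IsFiniteMeasure (volume.restrict K) := isFiniteMeasure_restrict.2 hK₁
  have hpos : volume.real K ≠ 0 := ENNReal.toReal_ne_zero.2 ⟨hK₀, hK₁⟩
  have hint : Integrable (fun y ↦ ⟪e, y⟫) (volume.restrict K) := hK.const_inner e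
  have hrefl : ∫ y in K, ⟪e, y⟫ = ∫ y in K, (2 * l - ⟪e, y⟫) := by
    rw [← (measurePreserving_hyperplaneReflection e l).setIntegral_preimage_emb
      (measurableEmbedding_hyperplaneReflection e l), hR]
    simp only [inner_hyperplaneReflection he]
  rw [integral_sub (integrable_const _) hint, setIntegral_const, smul_eq_mul] at hrefl
  rw [setAverage_eq, inner_smul_right, ← integral_inner (f := fun y ↦ y) hK]
  field_simp
  linarith

lemma isCompact_le_of_tendsto_cocompact_zero {X : Type*} [TopologicalSpace X] {u : X → ℝ}
    (hu : Continuous u) (hu₀ : Tendsto u (cocompact X) (𝓝 0)) {c : ℝ} (hc : 0 < c) :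
    IsCompact {x | c ≤ u x} := by
  obtain ⟨T, hT, hTu⟩ := mem_cocompact.1 (hu₀.eventually_lt_const hc)
  refine hT.of_isClosed_subset (isClosed_le continuous_const hu) fun x hx ↦ ?_
  by_contra hxT
  have hlt : u x < c := hTu hxT
  exact hlt.not_ge hx

/-- The common centre is the barycentre of a superlevel set of `u`: such a set is invariant under
each of the reflections, so its barycentre lies on each of the hyperplanes. -/
theorem exists_center_of_forall_hyperplaneReflection_symmetric {β : Type*} {u : E → ℝ} {v : E → β}
    (hu : Continuous u) (hu₀ : Tendsto u (cocompact E) (𝓝 0)) (hpos : ∃ x, 0 < u x)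
    (H : ∀ e : E, ‖e‖ = 1 →
      ∃ l, u ∘ hyperplaneReflection e l = u ∧ v ∘ hyperplaneReflection e l = v) :
    ∃ x₀ : E, ∀ x y, ‖x - x₀‖ = ‖y - x₀‖ → u x = u y ∧ v x = v y := by
  obtain ⟨z, hz⟩ := hpos
  set K : Set E := {x | u z / 2 ≤ u x}
  have hK : IsCompact K := isCompact_le_of_tendsto_cocompact_zero hu hu₀ (half_pos hz)
  have hK₀ : volume K ≠ 0 := by
    have hmem : K ∈ 𝓝 z :=
      (hu.continuousAt.eventually_const_lt (half_lt_self hz)).mono fun _ ↦ le_of_lt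
    exact (Measure.measure_pos_of_mem_nhds volume hmem).ne'
  refine ⟨⨍ y in K, y, fun x y hxy ↦ ?_⟩
  rcases eq_or_ne x y with rfl | hne
  · exact ⟨rfl, rfl⟩
  obtain ⟨e, he, hexy⟩ := exists_hyperplaneReflection_eq hne hxy
  obtain ⟨l, hul, hvl⟩ := H e he
  have hKl : hyperplaneReflection e l ⁻¹' K = K :=
    congrArg (fun w : E → ℝ ↦ {x | u z / 2 ≤ w x}) hul
  rw [inner_average_eq_of_preimage_hyperplaneReflection_eq he
    (continuous_id.continuousOn.integrableOn_compact hK) hK₀ hK.measure_lt_top.ne hKl] at hexy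
  subst hexy
  exact ⟨(congrFun hul x).symm, (congrFun hvl x).symm⟩

end Center

section FractionalLaplacian

lemma integrableOn_one_div_dist_rpow_compl_ball {E : Type*} [NormedAddCommGroup E]
    [NormedSpace ℝ E] [FiniteDimensional ℝ E] [MeasurableSpace E] [BorelSpace E] {μ : Measure E}
    [μ.IsAddHaarMeasure] {r ε : ℝ} (hr : (Module.finrank ℝ E : ℝ) < r) (hε : 0 < ε) (x : E) :
    IntegrableOn (fun y ↦ 1 / dist x y ^ r) (ball x ε)ᶜ μ := by
  have hr₀ : 0 < r := (Nat.cast_nonneg _).trans_lt hr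
  have hint : Integrable (fun y ↦ (1 + 1 / ε) ^ r * (1 + ‖x - y‖) ^ (-r)) μ :=
    ((integrable_one_add_norm hr).comp_sub_left x).const_mul _
  refine hint.integrableOn.mono' (Measurable.aestronglyMeasurable (by fun_prop)) ?_
  filter_upwards [ae_restrict_mem measurableSet_ball.compl] with y hy
  have hεy : ε ≤ dist x y := by simpa [dist_comm] using hy
  have hd : 0 < dist x y := hε.trans_le hεy
  rw [Real.norm_of_nonneg (by positivity), ← dist_eq_norm, Real.rpow_neg (by positivity),
    ← div_eq_mul_inv, div_le_div_iff₀ (by positivity) (by positivity), one_mul,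
    ← Real.mul_rpow (by positivity) (by positivity)]
  refine Real.rpow_le_rpow (by positivity) ?_ hr₀.le
  calc 1 + dist x y ≤ dist x y / ε + dist x y := by gcongr; exact (one_le_div hε).2 hεy
    _ = (1 + 1 / ε) * dist x y := by ring

lemma tendsto_measure_ball_nhdsGT_zero {X : Type*} [MetricSpace X] [ProperSpace X]
    [MeasurableSpace X] [OpensMeasurableSpace X] {μ : Measure X} [IsFiniteMeasureOnCompacts μ]
    [NullSingletonClass μ] (z : X) : Tendsto (fun ε ↦ μ (ball z ε)) (𝓝[>] 0) (𝓝 0) := by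
  have h := tendsto_measure_cthickening_of_isCompact (μ := μ) (isCompact_singleton (x := z))
  rw [measure_singleton] at h
  refine tendsto_of_tendsto_of_tendsto_of_le_of_le' tendsto_const_nhds
    (h.mono_left nhdsWithin_le_nhds) (.of_forall fun _ ↦ zero_le) ?_
  filter_upwards [self_mem_nhdsWithin] with ε hε
  rw [cthickening_singleton z (le_of_lt hε)]
  exact measure_mono ball_subset_closedBall

lemma tendsto_setIntegral_ball_nhdsGT_zero {X : Type*} [MetricSpace X] [ProperSpace X]
    [MeasurableSpace X] [OpensMeasurableSpace X] {μ : Measure X} [IsFiniteMeasureOnCompacts μ]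
    [NullSingletonClass μ] {f : X → ℝ} {z : X} (hf : IntegrableAtFilter f (𝓝 z) μ) :
    Tendsto (fun ε ↦ ∫ y in ball z ε, f y ∂μ) (𝓝[>] 0) (𝓝 0) := by
  obtain ⟨s, hs, hfs⟩ := hf
  obtain ⟨δ, hδ, hδs⟩ := Metric.mem_nhds_iff.1 hs
  have hzero : Tendsto (μ.restrict s ∘ ball z) (𝓝[>] 0) (𝓝 0) :=
    tendsto_of_tendsto_of_tendsto_of_le_of_le tendsto_const_nhds
      (tendsto_measure_ball_nhdsGT_zero (μ := μ) z) (fun _ ↦ zero_le)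
      (fun _ ↦ Measure.restrict_apply_le _ _)
  refine (hfs.tendsto_setIntegral_nhds_zero hzero).congr' ?_
  filter_upwards [Ioo_mem_nhdsGT hδ] with ε hε
  rw [Measure.restrict_restrict_of_subset ((ball_subset_ball hε.2.le).trans hδs)]

lemma tendsto_setIntegral_compl_ball_union_ball_nhdsGT_zero {X : Type*} [MetricSpace X]
    [ProperSpace X] [MeasurableSpace X] [OpensMeasurableSpace X] {μ : Measure X}
    [IsFiniteMeasureOnCompacts μ] [NullSingletonClass μ] {f : X → ℝ} (hf : Integrable f μ)
    (x z : X) :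
    Tendsto (fun ε ↦ ∫ y in (ball x ε ∪ ball z ε)ᶜ, f y ∂μ) (𝓝[>] 0) (𝓝 (∫ y, f y ∂μ)) := by
  have hsum := (tendsto_measure_ball_nhdsGT_zero (μ := μ) x).add
    (tendsto_measure_ball_nhdsGT_zero (μ := μ) z)
  rw [add_zero] at hsum
  have hzero : Tendsto (μ ∘ fun ε ↦ ball x ε ∪ ball z ε) (𝓝[>] 0) (𝓝 0) :=
    tendsto_of_tendsto_of_tendsto_of_le_of_le tendsto_const_nhds hsum (fun _ ↦ zero_le)
      (fun _ ↦ measure_union_le _ _)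
  have hlim := (hf.tendsto_setIntegral_nhds_zero hzero).const_sub (∫ y, f y ∂μ)
  rw [sub_zero] at hlim
  refine hlim.congr fun ε ↦ ?_
  rw [setIntegral_compl (measurableSet_ball.union measurableSet_ball) hf]

variable {n : ℕ} {α C M M' : ℝ} {u v w F G : EuclideanSpace ℝ (Fin n) → ℝ}
  {e x : EuclideanSpace ℝ (Fin n)} {l : ℝ}

/-- The integrand of the principal value defining `(−Δ)^{α/2} u x`. -/
def fracIntegrand (α : ℝ) (u : EuclideanSpace ℝ (Fin n) → ℝ) (x y : EuclideanSpace ℝ (Fin n)) : ℝ :=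
  (u x - u y) / dist x y ^ ((n : ℝ) + α)

lemma integrableOn_fracIntegrand (hα : 0 < α) (hu : AEStronglyMeasurable u) (hM : ∀ y, |u y| ≤ M)
    (x : EuclideanSpace ℝ (Fin n)) {ε : ℝ} (hε : 0 < ε) :
    IntegrableOn (fracIntegrand α u x) (ball x ε)ᶜ := by
  have hker : IntegrableOn (fun y ↦ 1 / dist x y ^ ((n : ℝ) + α)) (ball x ε)ᶜ :=
    integrableOn_one_div_dist_rpow_compl_ball (by simpa using hα) hε x
  have hbound (y) : ‖u x - u y‖ ≤ M + M := (norm_sub_le _ _).trans (add_le_add (hM x) (hM y))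
  refine (hker.bdd_mul (aestronglyMeasurable_const.sub hu.restrict) (.of_forall hbound)).congr
    (.of_forall fun y ↦ ?_)
  simp [fracIntegrand, div_eq_mul_inv]

lemma isFracLap_iff_tendsto_setIntegral_compl_ball :
    IsFracLap n α C u F ↔ ∀ x,
      Tendsto (fun ε ↦ C * ∫ y in (ball x ε)ᶜ, fracIntegrand α u x y) (𝓝[>] 0) (𝓝 (F x)) := by
  have hset (x : EuclideanSpace ℝ (Fin n)) (ε : ℝ) : (ball x ε)ᶜ = {y | ε ≤ dist x y} := by
    ext y
    simp [dist_comm]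
  simp only [hset]
  rfl

namespace IsFracLap

lemma comp_hyperplaneReflection (h : IsFracLap n α C u F) (e : EuclideanSpace ℝ (Fin n)) (l : ℝ) :
    IsFracLap n α C (u ∘ hyperplaneReflection e l) (F ∘ hyperplaneReflection e l) := by
  intro x
  refine (h (hyperplaneReflection e l x)).congr fun ε ↦ ?_
  rw [← (measurePreserving_hyperplaneReflection e l).setIntegral_preimage_emb
    (measurableEmbedding_hyperplaneReflection e l)]
  simp only [preimage_ofPred_eq, AffineIsometryEquiv.dist_map, Function.comp_apply]

lemma sub (hu : IsFracLap n α C u F) (hv : IsFracLap n α C v G) (hα : 0 < α)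
    (hum : AEStronglyMeasurable u) (hvm : AEStronglyMeasurable v) (huM : ∀ y, |u y| ≤ M)
    (hvM : ∀ y, |v y| ≤ M') : IsFracLap n α C (fun x ↦ u x - v x) (fun x ↦ F x - G x) := by
  rw [isFracLap_iff_tendsto_setIntegral_compl_ball] at hu hv ⊢
  refine fun x ↦ ((hu x).sub (hv x)).congr' ?_
  filter_upwards [self_mem_nhdsWithin] with ε hε
  rw [← mul_sub, ← integral_sub (integrableOn_fracIntegrand hα hum huM x hε)
    (integrableOn_fracIntegrand hα hvm hvM x hε)]
  congr! 3 with y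
  simp only [fracIntegrand]
  ring

lemma reflectionDiff (h : IsFracLap n α C u F) (hα : 0 < α) (hu : AEStronglyMeasurable u)
    (hM : ∀ y, |u y| ≤ M) (e : EuclideanSpace ℝ (Fin n)) (l : ℝ) :
    IsFracLap n α C (reflectionDiff e l u) (reflectionDiff e l F) :=
  (h.comp_hyperplaneReflection e l).sub h hα
    (hu.comp_measurePreserving (measurePreserving_hyperplaneReflection e l)) hu
    (fun y ↦ hM (hyperplaneReflection e l y)) hM

end IsFracLap

/-- The sum of the values of `fracIntegrand α u x` at `y` and at its mirror image. -/
def foldedIntegrand (α : ℝ) (u : EuclideanSpace ℝ (Fin n) → ℝ) (e : EuclideanSpace ℝ (Fin n))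
    (l : ℝ) (x y : EuclideanSpace ℝ (Fin n)) : ℝ :=
  fracIntegrand α u x y + fracIntegrand α u x (hyperplaneReflection e l y)

lemma foldedIntegrand_hyperplaneReflection (α : ℝ) (u : EuclideanSpace ℝ (Fin n) → ℝ)
    (e : EuclideanSpace ℝ (Fin n)) (l : ℝ) (x y : EuclideanSpace ℝ (Fin n)) :
    foldedIntegrand α u e l x (hyperplaneReflection e l y) = foldedIntegrand α u e l x y := by
  simp [foldedIntegrand, add_comm]

lemma integrableOn_comp_hyperplaneReflection {f : EuclideanSpace ℝ (Fin n) → ℝ}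
    {s : Set (EuclideanSpace ℝ (Fin n))} (hs : hyperplaneReflection e l ⁻¹' s = s)
    (hf : IntegrableOn f s) : IntegrableOn (f ∘ hyperplaneReflection e l) s := by
  simpa only [hs] using ((measurePreserving_hyperplaneReflection e l).integrableOn_comp_preimage
    (measurableEmbedding_hyperplaneReflection e l)).2 hf

lemma integrableOn_foldedIntegrand {s : Set (EuclideanSpace ℝ (Fin n))}
    (hs : hyperplaneReflection e l ⁻¹' s = s) (hint : IntegrableOn (fracIntegrand α u x) s) :
    IntegrableOn (foldedIntegrand α u e l x) s :=
  hint.add (integrableOn_comp_hyperplaneReflection hs hint)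

lemma setIntegral_foldedIntegrand {s : Set (EuclideanSpace ℝ (Fin n))}
    (hs : hyperplaneReflection e l ⁻¹' s = s) (hint : IntegrableOn (fracIntegrand α u x) s) :
    ∫ y in s, foldedIntegrand α u e l x y = 2 * ∫ y in s, fracIntegrand α u x y := by
  have hmirror : ∫ y in s, fracIntegrand α u x (hyperplaneReflection e l y) =
      ∫ y in s, fracIntegrand α u x y := by
    simpa only [hs] using (measurePreserving_hyperplaneReflection e l).setIntegral_preimage_emb
      (measurableEmbedding_hyperplaneReflection e l) (fracIntegrand α u x) s
  calc ∫ y in s, foldedIntegrand α u e l x y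
      = (∫ y in s, fracIntegrand α u x y) +
          ∫ y in s, fracIntegrand α u x (hyperplaneReflection e l y) :=
        integral_add hint (integrableOn_comp_hyperplaneReflection hs hint)
    _ = 2 * ∫ y in s, fracIntegrand α u x y := by rw [hmirror]; ring

lemma two_mul_setIntegral_compl_ball_fracIntegrand {ε : ℝ}
    (hint : IntegrableOn (fracIntegrand α u x) (ball x ε)ᶜ)
    (hdisj : Disjoint (ball x ε) (ball (hyperplaneReflection e l x) ε)) :
    2 * ∫ y in (ball x ε)ᶜ, fracIntegrand α u x y =
      (∫ y in (ball x ε ∪ ball (hyperplaneReflection e l x) ε)ᶜ, foldedIntegrand α u e l x y) +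
        2 * ∫ y in ball (hyperplaneReflection e l x) ε, fracIntegrand α u x y := by
  have hdiff : (ball x ε)ᶜ \ ball (hyperplaneReflection e l x) ε =
      (ball x ε ∪ ball (hyperplaneReflection e l x) ε)ᶜ := by rw [compl_union, sdiff_eq]
  rw [← integral_inter_add_sdiff measurableSet_ball hint,
    inter_eq_right.2 hdisj.symm.subset_compl_right, hdiff, setIntegral_foldedIntegrand
      (preimage_hyperplaneReflection_compl_ball_union_ball e l x ε)
      (hint.mono_set (compl_subset_compl.2 subset_union_left))]
  ring

theorem IsFracLap.two_mul_le_mul_integral (hG : IsFracLap n α C w G) (hα : 0 < α) (hC : 0 ≤ C)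
    (hw : AEStronglyMeasurable w) (hM : ∀ y, |w y| ≤ M) (hx : hyperplaneReflection e l x ≠ x)
    {h : EuclideanSpace ℝ (Fin n) → ℝ} (hint : Integrable h)
    (hle : ∀ y, foldedIntegrand α w e l x y ≤ h y) : 2 * G x ≤ C * ∫ y, h y := by
  have : Nontrivial (EuclideanSpace ℝ (Fin n)) := nontrivial_of_ne _ _ hx
  set z := hyperplaneReflection e l x
  set δ := dist x z / 2
  have hδ : 0 < δ := half_pos (dist_pos.2 hx.symm)
  have hdisj {ε : ℝ} (hε : ε ≤ δ) : Disjoint (ball x ε) (ball z ε) :=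
    ball_disjoint_ball (by linarith [show dist x z = δ + δ from (add_halves _).symm])
  have hint_g {ε : ℝ} (hε : 0 < ε) : IntegrableOn (fracIntegrand α w x) (ball x ε)ᶜ :=
    integrableOn_fracIntegrand hα hw hM x hε
  have hlim_z : Tendsto (fun ε ↦ ∫ y in ball z ε, fracIntegrand α w x y) (𝓝[>] 0) (𝓝 0) :=
    tendsto_setIntegral_ball_nhdsGT_zero
      ⟨ball z δ, ball_mem_nhds z hδ, (hint_g hδ).mono_set (hdisj le_rfl).symm.subset_compl_right⟩
  have hlim_h : Tendsto (fun ε ↦ ∫ y in (ball x ε ∪ ball z ε)ᶜ, h y) (𝓝[>] 0) (𝓝 (∫ y, h y)) :=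
    tendsto_setIntegral_compl_ball_union_ball_nhdsGT_zero hint x z
  have hlim := ((hlim_h.const_mul C).add ((hlim_z.const_mul 2).const_mul C))
  rw [mul_zero, mul_zero, add_zero] at hlim
  refine le_of_tendsto_of_tendsto
    ((isFracLap_iff_tendsto_setIntegral_compl_ball.1 hG x).const_mul 2) hlim ?_
  filter_upwards [Ioo_mem_nhdsGT hδ] with ε hε
  have hint_f : IntegrableOn (foldedIntegrand α w e l x) (ball x ε ∪ ball z ε)ᶜ :=
    integrableOn_foldedIntegrand (preimage_hyperplaneReflection_compl_ball_union_ball e l x ε)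
      ((hint_g hε.1).mono_set (compl_subset_compl.2 subset_union_left))
  rw [mul_left_comm, two_mul_setIntegral_compl_ball_fracIntegrand (hint_g hε.1) (hdisj hε.2.le),
    ← mul_add]
  gcongr ?_ * (?_ + _)
  exact setIntegral_mono hint_f hint.integrableOn hle

theorem IsFracLap.two_mul_le_of_forall_mem_ball (hG : IsFracLap n α C w G) (hα : 0 < α)
    (hC : 0 ≤ C) (hw : AEStronglyMeasurable w) (hM : ∀ y, |w y| ≤ M)
    (hx : hyperplaneReflection e l x ≠ x) {z : EuclideanSpace ℝ (Fin n)} {ρ c : ℝ}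
    (hle : ∀ y, foldedIntegrand α w e l x y ≤ 0)
    (hball : ∀ y ∈ ball z ρ, foldedIntegrand α w e l x y ≤ c) :
    2 * G x ≤ C * (volume.real (ball z ρ) * c) := by
  have hint : Integrable ((ball z ρ).indicator fun _ ↦ c) :=
    (integrable_indicator_iff measurableSet_ball).2 (integrableOn_const measure_ball_lt_top.ne)
  refine (hG.two_mul_le_mul_integral hα hC hw hM hx hint fun y ↦ ?_).trans_eq ?_
  · by_cases hy : y ∈ ball z ρ
    · simpa [hy] using hball y hy
    · simpa [hy] using hle y
  · rw [integral_indicator_const _ measurableSet_ball, smul_eq_mul]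

section Antisymmetric

lemma foldedIntegrand_eq (hanti : ∀ y, w (hyperplaneReflection e l y) = -w y)
    (x y : EuclideanSpace ℝ (Fin n)) :
    foldedIntegrand α w e l x y = (w x - w y) / dist x y ^ ((n : ℝ) + α) +
      (w x + w y) / dist x (hyperplaneReflection e l y) ^ ((n : ℝ) + α) := by
  simp [foldedIntegrand, fracIntegrand, hanti]

variable {y : EuclideanSpace ℝ (Fin n)}

lemma foldedIntegrand_le_of_inner_le (hα : 0 < α) (he : ‖e‖ = 1)
    (hanti : ∀ y, w (hyperplaneReflection e l y) = -w y) (hx : ⟪e, x⟫ ≤ l) (hy : ⟪e, y⟫ ≤ l)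
    (hxy : w x ≤ w y) :
    foldedIntegrand α w e l x y ≤
      2 * w x / dist x (hyperplaneReflection e l y) ^ ((n : ℝ) + α) := by
  have hfold : (w x - w y) / dist x y ^ ((n : ℝ) + α) ≤
      (w x - w y) / dist x (hyperplaneReflection e l y) ^ ((n : ℝ) + α) := by
    rcases eq_or_ne x y with rfl | hne
    · simp
    have hd : 0 < dist x y := dist_pos.2 hne
    have hdist := dist_le_dist_hyperplaneReflection he hx hy
    rw [← neg_sub (w y), neg_div, neg_div, neg_le_neg_iff]
    have := sub_nonneg.2 hxy
    gcongr
  calc foldedIntegrand α w e l x y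
      ≤ (w x - w y) / dist x (hyperplaneReflection e l y) ^ ((n : ℝ) + α) +
          (w x + w y) / dist x (hyperplaneReflection e l y) ^ ((n : ℝ) + α) := by
        rw [foldedIntegrand_eq hanti]
        gcongr
    _ = 2 * w x / dist x (hyperplaneReflection e l y) ^ ((n : ℝ) + α) := by ring

lemma foldedIntegrand_le_of_le_inner (hα : 0 < α) (he : ‖e‖ = 1)
    (hanti : ∀ y, w (hyperplaneReflection e l y) = -w y) (hx : ⟪e, x⟫ ≤ l) (hy : l ≤ ⟪e, y⟫)
    (hxy : w x ≤ w (hyperplaneReflection e l y)) :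
    foldedIntegrand α w e l x y ≤ 2 * w x / dist x y ^ ((n : ℝ) + α) := by
  have hy' : ⟪e, hyperplaneReflection e l y⟫ ≤ l := by
    rw [inner_hyperplaneReflection he]
    linarith
  simpa [foldedIntegrand_hyperplaneReflection] using
    foldedIntegrand_le_of_inner_le hα he hanti hx hy' hxy

lemma foldedIntegrand_nonpos (hα : 0 < α) (he : ‖e‖ = 1)
    (hanti : ∀ y, w (hyperplaneReflection e l y) = -w y) (hx : ⟪e, x⟫ ≤ l) (hwx : w x ≤ 0)
    (hmin : ∀ y, ⟪e, y⟫ ≤ l → w x ≤ w y) (y : EuclideanSpace ℝ (Fin n)) :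
    foldedIntegrand α w e l x y ≤ 0 := by
  have hneg (t : ℝ) (ht : 0 ≤ t) : 2 * w x / t ^ ((n : ℝ) + α) ≤ 0 :=
    div_nonpos_of_nonpos_of_nonneg (by linarith) (Real.rpow_nonneg ht _)
  rcases le_total ⟪e, y⟫ l with hy | hy
  · exact (foldedIntegrand_le_of_inner_le hα he hanti hx hy (hmin y hy)).trans
      (hneg _ dist_nonneg)
  · refine (foldedIntegrand_le_of_le_inner hα he hanti hx hy (hmin _ ?_)).trans
      (hneg _ dist_nonneg)
    rw [inner_hyperplaneReflection he]
    linarith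

/-- The constant in the bound of `IsFracLap.mul_rpow_le_at_nonpos_min` for the fractional Laplacian
at a nonpositive minimum. -/
def minDecayConst (n : ℕ) (α C : ℝ) : ℝ :=
  C * volume.real (ball (0 : EuclideanSpace ℝ (Fin n)) 1) / 5 ^ ((n : ℝ) + α)

lemma minDecayConst_pos (hC : 0 < C) : 0 < minDecayConst n α C := by
  have : 0 < volume.real (ball (0 : EuclideanSpace ℝ (Fin n)) 1) :=
    ENNReal.toReal_pos (measure_ball_pos _ _ one_pos).ne' measure_ball_lt_top.ne
  unfold minDecayConst
  positivity

lemma le_inner_and_dist_le_of_mem_ball (he : ‖e‖ = 1)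
    (hy : y ∈ ball (x + (4 * (l - ⟪e, x⟫)) • e) (l - ⟪e, x⟫)) :
    l ≤ ⟪e, y⟫ ∧ dist x y ≤ 5 * (l - ⟪e, x⟫) := by
  set d := l - ⟪e, x⟫
  set z := x + (4 * d) • e with hz
  have hd : 0 < d := pos_of_mem_ball hy
  constructor
  · have hyz : |⟪e, y - z⟫| < d :=
      (abs_inner_le_norm_of_norm_eq_one he _).trans_lt (by rwa [← dist_eq_norm])
    have hez : ⟪e, z⟫ = ⟪e, x⟫ + 4 * d := by
      rw [hz, inner_add_right, inner_smul_right, real_inner_self_eq_norm_sq, he]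
      ring
    rw [inner_sub_right] at hyz
    linarith [(abs_lt.1 hyz).1]
  · have hxz : dist x z = 4 * d := by
      rw [hz, dist_self_add_right, norm_smul, he, mul_one, Real.norm_of_nonneg (by positivity)]
    linarith [dist_triangle x z y, dist_comm y z, mem_ball.1 hy]

/-- The estimate localizes the folded integrand to the ball of radius `d = l - ⟪e, x⟫` around
`x + 4 d e`, which lies beyond the hyperplane and within distance `5 d` of `x`. -/
theorem IsFracLap.mul_rpow_le_at_nonpos_min (hG : IsFracLap n α C w G) (hα : 0 < α) (hC : 0 ≤ C)
    (hw : AEStronglyMeasurable w) (hM : ∀ y, |w y| ≤ M) (he : ‖e‖ = 1)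
    (hanti : ∀ y, w (hyperplaneReflection e l y) = -w y) (hx : ⟪e, x⟫ < l) (hwx : w x ≤ 0)
    (hmin : ∀ y, ⟪e, y⟫ ≤ l → w x ≤ w y) :
    G x * (l - ⟪e, x⟫) ^ α ≤ minDecayConst n α C * w x := by
  set d := l - ⟪e, x⟫
  set z := x + (4 * d) • e
  have hd : 0 < d := sub_pos.2 hx
  have hball (y) (hy : y ∈ ball z d) :
      foldedIntegrand α w e l x y ≤ 2 * w x / (5 * d) ^ ((n : ℝ) + α) := by
    obtain ⟨hly, hxy⟩ := le_inner_and_dist_le_of_mem_ball he hy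
    have hxy₀ : 0 < dist x y := dist_pos.2 (by rintro rfl; linarith)
    refine (foldedIntegrand_le_of_le_inner hα he hanti hx.le hly (hmin _ ?_)).trans ?_
    · rw [inner_hyperplaneReflection he]
      linarith
    · rw [← neg_le_neg_iff, ← neg_div, ← neg_div]
      have : 0 ≤ -(2 * w x) := by linarith
      gcongr
  have hvol : volume.real (ball z d) =
      d ^ n * volume.real (ball (0 : EuclideanSpace ℝ (Fin n)) 1) := by
    simp [measureReal_def, Measure.addHaar_ball_of_pos volume z hd, hd.le]
  have key := hG.two_mul_le_of_forall_mem_ball hα hC hw hM (hyperplaneReflection_ne_self he hx)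
    (foldedIntegrand_nonpos hα he hanti hx.le hwx hmin) hball
  rw [hvol, Real.mul_rpow (by norm_num) hd.le, Real.rpow_add hd, Real.rpow_natCast] at key
  calc G x * d ^ α = 2 * G x * d ^ α / 2 := by ring
    _ ≤ C * (d ^ n * volume.real (ball (0 : EuclideanSpace ℝ (Fin n)) 1) *
          (2 * w x / (5 ^ ((n : ℝ) + α) * (d ^ n * d ^ α)))) * d ^ α / 2 := by gcongr
    _ = minDecayConst n α C * w x := by
      rw [minDecayConst]
      field_simp

lemma foldedIntegrand_neg (hα : 0 < α) (he : ‖e‖ = 1)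
    (hanti : ∀ y, w (hyperplaneReflection e l y) = -w y) (hx : ⟪e, x⟫ < l) (hy : ⟪e, y⟫ < l)
    (hwx : w x = 0) (hwy : 0 < w y) : foldedIntegrand α w e l x y < 0 := by
  have hd : 0 < dist x y := dist_pos.2 (by rintro rfl; exact hwy.ne' hwx)
  have hdist := dist_lt_dist_hyperplaneReflection he hx hy
  have hlt : w y / dist x (hyperplaneReflection e l y) ^ ((n : ℝ) + α) <
      w y / dist x y ^ ((n : ℝ) + α) := by gcongr
  rw [foldedIntegrand_eq hanti, hwx, zero_sub, zero_add, neg_div]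
  linarith

lemma continuousAt_foldedIntegrand (hw : Continuous w) (hxy : x ≠ y)
    (hxy' : x ≠ hyperplaneReflection e l y) : ContinuousAt (foldedIntegrand α w e l x) y := by
  have hfrac {y} (h : x ≠ y) : ContinuousAt (fracIntegrand α w x) y :=
    ContinuousAt.div (by fun_prop)
      (ContinuousAt.rpow_const (by fun_prop) (.inl (dist_ne_zero.2 h)))
      (Real.rpow_pos_of_pos (dist_pos.2 h) _).ne'
  exact (hfrac hxy).add ((hfrac hxy').comp (hyperplaneReflection e l).continuous.continuousAt)

theorem IsFracLap.eq_zero_of_touching (hG : IsFracLap n α C w G) (hα : 0 < α) (hC : 0 < C)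
    (hw : Continuous w) (hM : ∀ y, |w y| ≤ M) (he : ‖e‖ = 1)
    (hanti : ∀ y, w (hyperplaneReflection e l y) = -w y) (hnonneg : ∀ y, ⟪e, y⟫ ≤ l → 0 ≤ w y)
    (hx : ⟪e, x⟫ < l) (hwx : w x = 0) (hGx : 0 ≤ G x) (hy : ⟪e, y⟫ < l) : w y = 0 := by
  by_contra hne
  have hwy : 0 < w y := (hnonneg y hy.le).lt_of_ne' hne
  have hxy' : x ≠ hyperplaneReflection e l y := fun h ↦ by
    rw [h, inner_hyperplaneReflection he] at hx
    linarith
  have hcont : ContinuousAt (foldedIntegrand α w e l x) y :=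
    continuousAt_foldedIntegrand hw (by rintro rfl; exact hne hwx) hxy'
  have hneg := foldedIntegrand_neg hα he hanti hx hy hwx hwy
  obtain ⟨ρ, hρ, hball⟩ := Metric.eventually_nhds_iff_ball.1
    (hcont.eventually_le_const (by linarith :
      foldedIntegrand α w e l x y < foldedIntegrand α w e l x y / 2))
  have key := hG.two_mul_le_of_forall_mem_ball hα hC.le hw.aestronglyMeasurable hM
    (hyperplaneReflection_ne_self he hx) (foldedIntegrand_nonpos hα he hanti hx.le hwx.le
      fun z hz ↦ hwx.trans_le (hnonneg z hz)) hball
  have hvol : 0 < volume.real (ball y ρ) :=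
    ENNReal.toReal_pos (measure_ball_pos _ _ hρ).ne' measure_ball_lt_top.ne
  have : C * (volume.real (ball y ρ) * (foldedIntegrand α w e l x y / 2)) < 0 :=
    mul_neg_of_pos_of_neg hC (mul_neg_of_pos_of_neg hvol (by linarith))
  linarith

end Antisymmetric

end FractionalLaplacian

section MovingPlanes

variable {E : Type*} [NormedAddCommGroup E] [InnerProductSpace ℝ E] {e : E} {α c : ℝ} {K : E → ℝ}

lemma exists_norm_le_of_le_mul_rpow (he : ‖e‖ = 1) (hα : 0 < α) (hc : 0 < c) (hK₀ : ∀ x, 0 ≤ K x)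
    (hK : Tendsto (fun x ↦ K x * ‖x‖ ^ α) (cobounded E) (𝓝 0)) (Λ : ℝ) :
    ∃ R, ∀ l ≤ Λ, ∀ x, ⟪e, x⟫ < l → c ≤ K x * (l - ⟪e, x⟫) ^ α → ‖x‖ ≤ R := by
  have hsmall : ∀ᶠ x in cobounded E, K x * ‖x‖ ^ α < c / 2 ^ α :=
    hK.eventually_lt_const (by positivity)
  obtain ⟨R, -, hR⟩ := hasBasis_cobounded_norm.eventually_iff.1 hsmall
  refine ⟨max R |Λ|, fun l hl x hx hcx ↦ ?_⟩
  by_contra! hlt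
  obtain ⟨hRx, hΛx⟩ := max_lt_iff.1 hlt
  have hdist : l - ⟪e, x⟫ ≤ 2 * ‖x‖ := by
    linarith [(abs_le.1 (abs_inner_le_norm_of_norm_eq_one he x)).1, le_abs_self Λ]
  have : K x * (l - ⟪e, x⟫) ^ α < c :=
    calc K x * (l - ⟪e, x⟫) ^ α ≤ K x * (2 * ‖x‖) ^ α := by
          have := sub_pos.2 hx
          gcongr
          exact hK₀ x
      _ = K x * ‖x‖ ^ α * 2 ^ α := by
          rw [Real.mul_rpow two_pos.le (norm_nonneg x)]
          ring
      _ < c := (lt_div_iff₀ (by positivity)).1 (hR hRx.le)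
  exact this.not_ge hcx

lemma exists_nonpos_of_tendsto_of_forall_exists_neg [ProperSpace E] {W : ℝ → E → ℝ} (hα : 0 < α)
    (hc : 0 < c) (hW : Continuous fun z : ℝ × E ↦ W z.1 z.2) (hK : Continuous K) {R l : ℝ}
    {L : ℕ → ℝ} (hL : Tendsto L atTop (𝓝 l))
    (hneg : ∀ k, ∃ x, ⟪e, x⟫ < L k ∧ W (L k) x < 0 ∧ c ≤ K x * (L k - ⟪e, x⟫) ^ α ∧ ‖x‖ ≤ R) :
    ∃ y, ⟪e, y⟫ < l ∧ W l y ≤ 0 := by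
  choose X hXL hXneg hXc hXR using hneg
  obtain ⟨y, -, φ, hφ, hy⟩ := (isCompact_closedBall (0 : E) R).tendsto_subseq
    fun k ↦ mem_closedBall_zero_iff.2 (hXR k)
  have hlim {g : ℝ × E → ℝ} (hg : Continuous g) :
      Tendsto (fun k ↦ g (L (φ k), X (φ k))) atTop (𝓝 (g (l, y))) :=
    (hg.tendsto (l, y)).comp ((hL.comp hφ.tendsto_atTop).prodMk_nhds hy)
  have hyl : ⟪e, y⟫ ≤ l := le_of_tendsto_of_tendsto' (hlim (g := fun z ↦ ⟪e, z.2⟫) (by fun_prop))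
    (hlim continuous_fst) fun k ↦ (hXL (φ k)).le
  have hyc : c ≤ K y * (l - ⟪e, y⟫) ^ α := by
    refine ge_of_tendsto' (hlim (g := fun z ↦ K z.2 * (z.1 - ⟪e, z.2⟫) ^ α) ?_) fun k ↦ hXc (φ k)
    exact (hK.comp continuous_snd).mul
      ((by fun_prop : Continuous fun z : ℝ × E ↦ z.1 - ⟪e, z.2⟫).rpow_const fun _ ↦ .inr hα.le)
  refine ⟨y, hyl.lt_of_ne fun h ↦ ?_, le_of_tendsto' (hlim hW) fun k ↦ (hXneg (φ k)).le⟩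
  rw [h, sub_self, Real.zero_rpow hα.ne', mul_zero] at hyc
  exact hyc.not_gt hc

theorem exists_critical_hyperplane [ProperSpace E] {W : ℝ → E → ℝ} (he : ‖e‖ = 1) (hα : 0 < α)
    (hc : 0 < c) (hW : Continuous fun z : ℝ × E ↦ W z.1 z.2) (hK : Continuous K)
    (hK₀ : ∀ x, 0 ≤ K x) (hKα : Tendsto (fun x ↦ K x * ‖x‖ ^ α) (cocompact E) (𝓝 0))
    (hmin : ∀ l, (∃ x, ⟪e, x⟫ < l ∧ W l x < 0) →
      ∃ x, ⟪e, x⟫ < l ∧ W l x < 0 ∧ c ≤ K x * (l - ⟪e, x⟫) ^ α)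
    (hneg : ∃ l x, ⟪e, x⟫ < l ∧ W l x < 0) :
    ∃ l, (∀ y, ⟪e, y⟫ < l → 0 ≤ W l y) ∧ ∃ y, ⟪e, y⟫ < l ∧ W l y = 0 := by
  rw [← cobounded_eq_cocompact] at hKα
  have hbound := exists_norm_le_of_le_mul_rpow he hα hc hK₀ hKα
  set B : Set ℝ := {l | ∃ x, ⟪e, x⟫ < l ∧ W l x < 0} with hB
  have hBopen : IsOpen B := by
    simp only [hB, ofPred_exists]
    exact isOpen_iUnion fun x ↦ (isOpen_lt continuous_const continuous_id).inter
      (isOpen_lt (hW.comp (.prodMk_left x)) continuous_const)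
  have hBbdd : BddBelow B := by
    obtain ⟨R, hR⟩ := hbound 0
    refine ⟨min 0 (-R), fun l hl ↦ ?_⟩
    obtain ⟨x, hx, -, hxc⟩ := hmin l hl
    rcases le_total l 0 with hl₀ | hl₀
    · have := hR l hl₀ x hx hxc
      exact min_le_of_right_le
        (by linarith [(abs_le.1 (abs_inner_le_norm_of_norm_eq_one he x)).1])
    · exact min_le_of_left_le hl₀
  have hnot : sInf B ∉ B := fun h ↦ by
    obtain ⟨l, hl, hlB⟩ := ((hBopen.eventually_mem h).filter_mono
      nhdsWithin_le_nhds |>.and (self_mem_nhdsWithin (s := Iio (sInf B)))).exists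
    exact (csInf_le hBbdd hl).not_gt hlB
  have hnonneg : ∀ y, ⟪e, y⟫ < sInf B → 0 ≤ W (sInf B) y := fun y hy ↦
    not_lt.1 fun h ↦ hnot ⟨y, hy, h⟩
  obtain ⟨L, hLanti, hL, hLB⟩ := exists_seq_tendsto_sInf hneg hBbdd
  obtain ⟨R, hR⟩ := hbound (L 0)
  obtain ⟨y, hy, hWy⟩ := exists_nonpos_of_tendsto_of_forall_exists_neg (R := R) hα hc hW hK hL
    fun k ↦ by
      obtain ⟨x, hx, hWx, hxc⟩ := hmin _ (hLB k)
      exact ⟨x, hx, hWx, hxc, hR _ (hLanti k.zero_le) x hx hxc⟩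
  exact ⟨sInf B, hnonneg, y, hy, hWy.antisymm (hnonneg y hy)⟩

lemma exists_neg_min_of_exists_neg {w : E → ℝ} (hw : Continuous w)
    (hw₀ : Tendsto w (cocompact E) (𝓝 0)) {l : ℝ} (hwl : ∀ y, ⟪e, y⟫ = l → w y = 0)
    (hneg : ∃ x, ⟪e, x⟫ < l ∧ w x < 0) :
    ∃ x, ⟪e, x⟫ < l ∧ w x < 0 ∧ ∀ y, ⟪e, y⟫ ≤ l → w x ≤ w y := by
  obtain ⟨x₁, hx₁, hwx₁⟩ := hneg
  have hclosed : IsClosed {y : E | ⟪e, y⟫ ≤ l} := isClosed_le (by fun_prop) continuous_const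
  obtain ⟨x, hx, hmin⟩ := hw.continuousOn.exists_isMinOn' hclosed (x₀ := x₁) hx₁.le
    (((hw₀.eventually_const_lt hwx₁).mono fun _ ↦ le_of_lt).filter_mono inf_le_left)
  have hwx : w x < 0 := (hmin (mem_ofPred.2 hx₁.le)).trans_lt hwx₁
  exact ⟨x, (show ⟪e, x⟫ ≤ l from hx).lt_of_ne fun h ↦ hwx.ne (hwl x h), hwx, fun y hy ↦ hmin hy⟩

lemma exists_reflectionDiff_neg [ProperSpace E] (he : ‖e‖ = 1) {u : E → ℝ}
    (hu : Tendsto u (cocompact E) (𝓝 0)) (hpos : 0 < u 0) :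
    ∃ l x, ⟪e, x⟫ < l ∧ reflectionDiff e l u x < 0 := by
  have hline : Tendsto (fun l : ℝ ↦ (2 * l) • e) atTop (cocompact E) := by
    rw [← cobounded_eq_cocompact, ← tendsto_norm_atTop_iff_cobounded]
    simpa [norm_smul, he] using tendsto_abs_atTop_atTop.const_mul_atTop two_pos
  obtain ⟨l, hlu, hl⟩ :=
    (((hu.comp hline).eventually_lt_const hpos).and (eventually_gt_atTop 0)).exists
  refine ⟨l, 0, by simpa using hl, ?_⟩
  rw [reflectionDiff, hyperplaneReflection_zero]
  exact sub_neg.2 hlu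

end MovingPlanes

section CooperativeSystem

/-- A nonlinearity `f` which is strictly increasing in its second variable and whose decrements are
controlled by `K`: if `s` decreases, and decreases at least as much as `t`, then `f s t` decreases
by at most `K s t` times the decrement of `s`. -/
structure CooperativeBound (f K : ℝ → ℝ → ℝ) : Prop where
  continuousOn : ContinuousOn (fun z : ℝ × ℝ ↦ K z.1 z.2) (Ioi 0 ×ˢ Ioi 0)
  nonneg : ∀ ⦃s t⦄, 0 < s → 0 < t → 0 ≤ K s t
  mul_sub_le : ∀ ⦃s t s' t'⦄, 0 < s → 0 < t → 0 < s' → 0 < t' → s' ≤ s → s' - s ≤ t' - t →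
    K s t * (s' - s) ≤ f s' t' - f s t
  strictMonoOn : ∀ ⦃s⦄, 0 < s → StrictMonoOn (f s) (Ioi 0)

/-- `u` is a positive continuous solution, vanishing at infinity, of the equation
`(-Δ)^{α/2} u = f(u, v)`, where `K` is a cooperative bound for `f` such that `K(u, v)` decays faster
than `|x|^{-α}`. The system of the paper is the conjunction of two such equations, the second with
the roles of `u` and `v` exchanged. -/
structure IsCooperativeSolution (n : ℕ) (α C : ℝ) (f K : ℝ → ℝ → ℝ)
    (u v : EuclideanSpace ℝ (Fin n) → ℝ) : Prop where
  cooperativeBound : CooperativeBound f K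
  continuous : Continuous u
  pos : ∀ x, 0 < u x
  tendsto_zero : Tendsto u (cocompact _) (𝓝 0)
  isFracLap : IsFracLap n α C u fun x ↦ f (u x) (v x)
  tendsto_mul_rpow : Tendsto (fun x ↦ K (u x) (v x) * ‖x‖ ^ α) (cocompact _) (𝓝 0)

lemma exists_forall_abs_le_of_tendsto_cocompact {X : Type*} [TopologicalSpace X] {u : X → ℝ}
    (hu : Continuous u) (hu₀ : Tendsto u (cocompact X) (𝓝 0)) : ∃ M, ∀ x, |u x| ≤ M :=
  ⟨_, (ZeroAtInftyContinuousMap.toBCF ⟨⟨u, hu⟩, hu₀⟩).norm_coe_le_norm⟩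

namespace IsCooperativeSolution

variable {n : ℕ} {α C l : ℝ} {f g K K' : ℝ → ℝ → ℝ} {u v : EuclideanSpace ℝ (Fin n) → ℝ}
  {e x y : EuclideanSpace ℝ (Fin n)}

lemma isFracLap_reflectionDiff (h : IsCooperativeSolution n α C f K u v) (hα : 0 < α)
    (e : EuclideanSpace ℝ (Fin n)) (l : ℝ) :
    IsFracLap n α C (reflectionDiff e l u) (reflectionDiff e l fun x ↦ f (u x) (v x)) :=
  have ⟨_, hM⟩ := exists_forall_abs_le_of_tendsto_cocompact h.continuous h.tendsto_zero
  h.isFracLap.reflectionDiff hα h.continuous.aestronglyMeasurable hM e l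

lemma exists_forall_abs_reflectionDiff_le (h : IsCooperativeSolution n α C f K u v)
    (e : EuclideanSpace ℝ (Fin n)) (l : ℝ) : ∃ M, ∀ x, |reflectionDiff e l u x| ≤ M :=
  exists_forall_abs_le_of_tendsto_cocompact (continuous_reflectionDiff h.continuous e l)
    (tendsto_reflectionDiff_cocompact h.tendsto_zero e l)

lemma reflectionDiff_mul_rpow_le (h : IsCooperativeSolution n α C f K u v) (hα : 0 < α)
    (hC : 0 ≤ C) (he : ‖e‖ = 1) (hx : ⟪e, x⟫ < l) (hux : reflectionDiff e l u x ≤ 0)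
    (hmin : ∀ y, ⟪e, y⟫ ≤ l → reflectionDiff e l u x ≤ reflectionDiff e l u y) :
    reflectionDiff e l (fun x ↦ f (u x) (v x)) x * (l - ⟪e, x⟫) ^ α ≤
      minDecayConst n α C * reflectionDiff e l u x :=
  have ⟨_, hM⟩ := h.exists_forall_abs_reflectionDiff_le e l
  (h.isFracLap_reflectionDiff hα e l).mul_rpow_le_at_nonpos_min hα hC
    (continuous_reflectionDiff h.continuous e l).aestronglyMeasurable hM he
    (reflectionDiff_hyperplaneReflection e l u) hx hux hmin

lemma minDecayConst_le_of_neg_min (h : IsCooperativeSolution n α C f K u v) (hv : ∀ x, 0 < v x)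
    (hα : 0 < α) (hC : 0 ≤ C) (he : ‖e‖ = 1) (hx : ⟪e, x⟫ < l) (hux : reflectionDiff e l u x < 0)
    (huv : reflectionDiff e l u x ≤ reflectionDiff e l v x)
    (hmin : ∀ y, ⟪e, y⟫ ≤ l → reflectionDiff e l u x ≤ reflectionDiff e l u y) :
    minDecayConst n α C ≤ K (u x) (v x) * (l - ⟪e, x⟫) ^ α := by
  have : 0 < l - ⟪e, x⟫ := sub_pos.2 hx
  have hcoop : K (u x) (v x) * reflectionDiff e l u x ≤
      reflectionDiff e l (fun x ↦ f (u x) (v x)) x :=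
    h.cooperativeBound.mul_sub_le (h.pos x) (hv x) (h.pos _) (hv _) (sub_neg.1 hux).le huv
  refine (mul_le_mul_right_of_neg hux).1 ?_
  calc K (u x) (v x) * (l - ⟪e, x⟫) ^ α * reflectionDiff e l u x
      = K (u x) (v x) * reflectionDiff e l u x * (l - ⟪e, x⟫) ^ α := by ring
    _ ≤ reflectionDiff e l (fun x ↦ f (u x) (v x)) x * (l - ⟪e, x⟫) ^ α := by gcongr
    _ ≤ minDecayConst n α C * reflectionDiff e l u x :=
        h.reflectionDiff_mul_rpow_le hα hC he hx hux.le hmin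

lemma reflectionDiff_eq_zero_of_touching (h : IsCooperativeSolution n α C f K u v)
    (hv : ∀ x, 0 < v x) (hα : 0 < α) (hC : 0 < C) (he : ‖e‖ = 1)
    (hu_nonneg : ∀ y, ⟪e, y⟫ < l → 0 ≤ reflectionDiff e l u y)
    (hv_nonneg : ∀ y, ⟪e, y⟫ < l → 0 ≤ reflectionDiff e l v y)
    (hx : ⟪e, x⟫ < l) (hux : reflectionDiff e l u x = 0) (hy : ⟪e, y⟫ < l) :
    reflectionDiff e l u y = 0 ∧ reflectionDiff e l v y = 0 := by
  have hle {y} (hy : ⟪e, y⟫ ≤ l) : 0 ≤ reflectionDiff e l u y :=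
    hy.lt_or_eq.elim (hu_nonneg y) fun h ↦ (reflectionDiff_eq_zero_of_inner_eq he u h).ge
  have hrhs {z} (huz : reflectionDiff e l u z = 0) : reflectionDiff e l (fun x ↦ f (u x) (v x)) z =
      f (u z) (v (hyperplaneReflection e l z)) - f (u z) (v z) := by
    rw [reflectionDiff, sub_eq_zero.1 huz]
  have hmono {s : ℝ} (hs : 0 < s) := h.cooperativeBound.strictMonoOn hs
  have hrhs_nonneg : 0 ≤ reflectionDiff e l (fun x ↦ f (u x) (v x)) x := by
    rw [hrhs hux]
    exact sub_nonneg.2 ((hmono (h.pos x)).monotoneOn (hv _) (hv _) (sub_nonneg.1 (hv_nonneg x hx)))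
  obtain ⟨M, hM⟩ := h.exists_forall_abs_reflectionDiff_le e l
  have huy : reflectionDiff e l u y = 0 :=
    (h.isFracLap_reflectionDiff hα e l).eq_zero_of_touching hα hC
      (continuous_reflectionDiff h.continuous e l) hM he
      (reflectionDiff_hyperplaneReflection e l u) (fun _ ↦ hle) hx hux hrhs_nonneg hy
  have hrhs_nonpos : reflectionDiff e l (fun x ↦ f (u x) (v x)) y ≤ 0 := by
    have := h.reflectionDiff_mul_rpow_le hα hC.le he hy huy.le fun z hz ↦ huy.trans_le (hle hz)
    rw [huy, mul_zero] at this
    exact nonpos_of_mul_nonpos_left this (Real.rpow_pos_of_pos (sub_pos.2 hy) α)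
  rw [hrhs huy, sub_nonpos, (hmono (h.pos y)).le_iff_le (hv _) (hv _)] at hrhs_nonpos
  exact ⟨huy, (sub_nonpos.2 hrhs_nonpos).antisymm (hv_nonneg y hy)⟩

lemma continuous_bound (h : IsCooperativeSolution n α C f K u v) (hv : Continuous v)
    (hv_pos : ∀ x, 0 < v x) : Continuous fun x ↦ K (u x) (v x) :=
  h.cooperativeBound.continuousOn.comp_continuous (h.continuous.prodMk hv)
    fun x ↦ ⟨h.pos x, hv_pos x⟩

lemma minDecayConst_le_add_of_neg_min (hu : IsCooperativeSolution n α C f K u v)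
    (hv : IsCooperativeSolution n α C g K' v u) (hα : 0 < α) (hC : 0 ≤ C) (he : ‖e‖ = 1)
    (hx : ⟪e, x⟫ < l) (hneg : min (reflectionDiff e l u x) (reflectionDiff e l v x) < 0)
    (hmin : ∀ y, ⟪e, y⟫ ≤ l → min (reflectionDiff e l u x) (reflectionDiff e l v x) ≤
      min (reflectionDiff e l u y) (reflectionDiff e l v y)) :
    minDecayConst n α C ≤ (K (u x) (v x) + K' (v x) (u x)) * (l - ⟪e, x⟫) ^ α := by
  have hK := hu.cooperativeBound.nonneg (hu.pos x) (hv.pos x)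
  have hK' := hv.cooperativeBound.nonneg (hv.pos x) (hu.pos x)
  have hd : 0 < l - ⟪e, x⟫ := sub_pos.2 hx
  rcases le_total (reflectionDiff e l u x) (reflectionDiff e l v x) with huv | hvu
  · rw [min_eq_left huv] at hneg hmin
    refine (hu.minDecayConst_le_of_neg_min hv.pos hα hC he hx hneg huv
      fun y hy ↦ (hmin y hy).trans (min_le_left _ _)).trans ?_
    gcongr
    linarith
  · rw [min_eq_right hvu] at hneg hmin
    refine (hv.minDecayConst_le_of_neg_min hu.pos hα hC he hx hneg hvu
      fun y hy ↦ (hmin y hy).trans (min_le_right _ _)).trans ?_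
    gcongr
    linarith

lemma exists_touching_hyperplane (hu : IsCooperativeSolution n α C f K u v)
    (hv : IsCooperativeSolution n α C g K' v u) (hα : 0 < α) (hC : 0 < C) (he : ‖e‖ = 1) :
    ∃ l, (∀ y, ⟪e, y⟫ < l → 0 ≤ min (reflectionDiff e l u y) (reflectionDiff e l v y)) ∧
      ∃ x, ⟪e, x⟫ < l ∧ min (reflectionDiff e l u x) (reflectionDiff e l v x) = 0 := by
  obtain ⟨l₁, x₁, hx₁, hux₁⟩ := exists_reflectionDiff_neg he hu.tendsto_zero (hu.pos 0)
  refine exists_critical_hyperplane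
    (W := fun l x ↦ min (reflectionDiff e l u x) (reflectionDiff e l v x))
    (K := fun x ↦ K (u x) (v x) + K' (v x) (u x)) he hα
    (minDecayConst_pos (n := n) (α := α) hC)
    ((continuous_uncurry_reflectionDiff he hu.continuous).min
      (continuous_uncurry_reflectionDiff he hv.continuous))
    ((hu.continuous_bound hv.continuous hv.pos).add (hv.continuous_bound hu.continuous hu.pos))
    (fun x ↦ add_nonneg (hu.cooperativeBound.nonneg (hu.pos x) (hv.pos x))
      (hv.cooperativeBound.nonneg (hv.pos x) (hu.pos x)))
    (by simpa only [add_mul, add_zero] using hu.tendsto_mul_rpow.add hv.tendsto_mul_rpow)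
    (fun l hneg ↦ ?_) ⟨l₁, x₁, hx₁, min_lt_of_left_lt hux₁⟩
  obtain ⟨x, hx, hWx, hmin⟩ := exists_neg_min_of_exists_neg
    ((continuous_reflectionDiff hu.continuous e l).min
      (continuous_reflectionDiff hv.continuous e l))
    (by
      simpa only [min_self] using (tendsto_reflectionDiff_cocompact hu.tendsto_zero e l).min
        (tendsto_reflectionDiff_cocompact hv.tendsto_zero e l))
    (fun y hy ↦ by
      rw [reflectionDiff_eq_zero_of_inner_eq he u hy, reflectionDiff_eq_zero_of_inner_eq he v hy,
        min_self]) hneg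
  exact ⟨x, hx, hWx, hu.minDecayConst_le_add_of_neg_min hv hα hC.le he hx hWx hmin⟩

lemma exists_hyperplaneReflection_symmetric (hu : IsCooperativeSolution n α C f K u v)
    (hv : IsCooperativeSolution n α C g K' v u) (hα : 0 < α) (hC : 0 < C) (he : ‖e‖ = 1) :
    ∃ l, u ∘ hyperplaneReflection e l = u ∧ v ∘ hyperplaneReflection e l = v := by
  obtain ⟨l, hnonneg, x, hx, htouch⟩ := hu.exists_touching_hyperplane hv hα hC he
  have hu_nonneg y hy := (le_min_iff.1 (hnonneg y hy)).1
  have hv_nonneg y hy := (le_min_iff.1 (hnonneg y hy)).2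
  have hzero : ∀ y, ⟪e, y⟫ < l → reflectionDiff e l u y = 0 ∧ reflectionDiff e l v y = 0 := by
    rcases min_choice (reflectionDiff e l u x) (reflectionDiff e l v x) with h | h <;>
      rw [h] at htouch
    · exact fun y ↦ hu.reflectionDiff_eq_zero_of_touching hv.pos hα hC he hu_nonneg hv_nonneg hx
        htouch
    · exact fun y hy ↦ (hv.reflectionDiff_eq_zero_of_touching hu.pos hα hC he hv_nonneg hu_nonneg
        hx htouch hy).symm
  exact ⟨l, comp_hyperplaneReflection_eq_of_reflectionDiff_eq_zero he fun y hy ↦ (hzero y hy).1,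
    comp_hyperplaneReflection_eq_of_reflectionDiff_eq_zero he fun y hy ↦ (hzero y hy).2⟩

theorem exists_radial_center (hu : IsCooperativeSolution n α C f K u v)
    (hv : IsCooperativeSolution n α C g K' v u) (hα : 0 < α) (hC : 0 < C) :
    ∃ x₀, ∀ x y, ‖x - x₀‖ = ‖y - x₀‖ → u x = u y ∧ v x = v y :=
  exists_center_of_forall_hyperplaneReflection_symmetric hu.continuous hu.tendsto_zero
    ⟨0, hu.pos 0⟩ fun _ he ↦ hu.exists_hyperplaneReflection_symmetric hv hα hC he

end IsCooperativeSolution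

end CooperativeSystem

section PowerNonlinearity

lemma mul_rpow_sub_one_mul_sub_le {p s s' : ℝ} (hp : 1 ≤ p) (hs : 0 < s) (hs' : 0 < s') :
    p * s ^ (p - 1) * (s' - s) ≤ s' ^ p - s ^ p := by
  have hratio : 1 + (s' - s) / s = s' / s := by
    field_simp
    ring
  have hbern := one_add_mul_self_le_rpow_one_add (s := (s' - s) / s)
    (by rw [le_div_iff₀ hs]; linarith) hp
  rw [hratio, Real.div_rpow hs'.le hs.le, le_div_iff₀ (by positivity)] at hbern
  rw [Real.rpow_sub_one hs.ne']
  calc p * (s ^ p / s) * (s' - s) = (1 + p * ((s' - s) / s)) * s ^ p - s ^ p := by ring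
    _ ≤ s' ^ p - s ^ p := by gcongr

/-- The sum of the two partial derivatives of `s ^ p * t ^ q`, a cooperative bound for this
monomial. -/
def rpowMulRpowBound (p q s t : ℝ) : ℝ :=
  p * s ^ (p - 1) * t ^ q + q * s ^ p * t ^ (q - 1)

lemma rpowMulRpowBound_mul_sub_le {p q s t s' t' : ℝ} (hp : 1 ≤ p) (hq : 1 ≤ q) (hs : 0 < s)
    (ht : 0 < t) (hs' : 0 < s') (ht' : 0 < t') (hss' : s' ≤ s) (hst : s' - s ≤ t' - t) :
    rpowMulRpowBound p q s t * (s' - s) ≤ s' ^ p * t' ^ q - s ^ p * t ^ q := by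
  have hs_tangent := mul_rpow_sub_one_mul_sub_le hp hs hs'
  rcases le_total t t' with htt' | htt'
  · have hs_neg : q * s ^ p * t ^ (q - 1) * (s' - s) ≤ 0 :=
      mul_nonpos_of_nonneg_of_nonpos (by positivity) (sub_nonpos.2 hss')
    calc rpowMulRpowBound p q s t * (s' - s)
        = p * s ^ (p - 1) * (s' - s) * t ^ q + q * s ^ p * t ^ (q - 1) * (s' - s) := by
          rw [rpowMulRpowBound]
          ring
      _ ≤ (s' ^ p - s ^ p) * t ^ q + 0 := by gcongr
      _ = s' ^ p * t ^ q - s ^ p * t ^ q := by ring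
      _ ≤ s' ^ p * t' ^ q - s ^ p * t ^ q := by gcongr
  · have ht_tangent := mul_rpow_sub_one_mul_sub_le hq ht ht'
    have hs_nonpos : s' ^ p - s ^ p ≤ 0 := sub_nonpos.2 (by gcongr)
    have ht_le : t' ^ q ≤ t ^ q := by gcongr
    calc rpowMulRpowBound p q s t * (s' - s)
        = p * s ^ (p - 1) * (s' - s) * t ^ q + s ^ p * (q * t ^ (q - 1) * (s' - s)) := by
          rw [rpowMulRpowBound]
          ring
      _ ≤ (s' ^ p - s ^ p) * t ^ q + s ^ p * (q * t ^ (q - 1) * (t' - t)) := by gcongr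
      _ ≤ (s' ^ p - s ^ p) * t' ^ q + s ^ p * (t' ^ q - t ^ q) :=
          add_le_add (mul_le_mul_of_nonpos_left ht_le hs_nonpos) (by gcongr)
      _ = s' ^ p * t' ^ q - s ^ p * t ^ q := by ring

lemma cooperativeBound_rpow_mul_rpow {p q : ℝ} (hp : 1 ≤ p) (hq : 1 ≤ q) :
    CooperativeBound (fun s t ↦ s ^ p * t ^ q) (rpowMulRpowBound p q) where
  continuousOn := fun z hz ↦ by
    have hs : z.1 ≠ 0 := (mem_Ioi.1 hz.1).ne'
    have ht : z.2 ≠ 0 := (mem_Ioi.1 hz.2).ne'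
    refine ContinuousAt.continuousWithinAt ?_
    unfold rpowMulRpowBound
    fun_prop (disch := simp [hs, ht])
  nonneg s t hs ht := by
    rw [rpowMulRpowBound]
    positivity
  mul_sub_le s t s' t' := rpowMulRpowBound_mul_sub_le hp hq
  strictMonoOn s hs _ ht _ _ htt' := mul_lt_mul_of_pos_left
    (Real.rpow_lt_rpow (mem_Ioi.1 ht).le htt' (by positivity)) (Real.rpow_pos_of_pos hs p)

lemma CooperativeBound.sum {ι : Type*} [Fintype ι] [Nonempty ι] {f K : ι → ℝ → ℝ → ℝ}
    (h : ∀ i, CooperativeBound (f i) (K i)) :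
    CooperativeBound (fun s t ↦ ∑ i, f i s t) (fun s t ↦ ∑ i, K i s t) where
  continuousOn := continuousOn_finsetSum _ fun i _ ↦ (h i).continuousOn
  nonneg s t hs ht := Finset.sum_nonneg fun i _ ↦ (h i).nonneg hs ht
  mul_sub_le s t s' t' hs ht hs' ht' hss' hst := by
    rw [Finset.sum_mul, ← Finset.sum_sub_distrib]
    exact Finset.sum_le_sum fun i _ ↦ (h i).mul_sub_le hs ht hs' ht' hss' hst
  strictMonoOn s hs t ht t' ht' htt' :=
    Finset.sum_lt_sum_of_nonempty Finset.univ_nonempty fun i _ ↦ (h i).strictMonoOn hs ht ht' htt'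

variable {E : Type*} [NormedAddCommGroup E] [ProperSpace E] {u v : E → ℝ} {α a b : ℝ}

lemma tendsto_zero_of_isBigO_rpow_neg (ha : 0 < a)
    (hu : u =O[cocompact E] fun x ↦ ‖x‖ ^ (-a)) : Tendsto u (cocompact E) (𝓝 0) :=
  hu.trans_tendsto ((tendsto_rpow_neg_atTop ha).comp (tendsto_norm_cocompact_atTop (E := E)))

lemma tendsto_rpow_mul_rpow_mul_norm_rpow (hu : u =O[cocompact E] fun x ↦ ‖x‖ ^ (-a))
    (hv : v =O[cocompact E] fun x ↦ ‖x‖ ^ (-b)) {P Q : ℝ} (hP : 0 ≤ P) (hQ : 0 ≤ Q)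
    (hα : α < a * P + b * Q) :
    Tendsto (fun x ↦ u x ^ P * v x ^ Q * ‖x‖ ^ α) (cocompact E) (𝓝 0) := by
  have hnonneg (c : ℝ) : 0 ≤ᶠ[cocompact E] fun x ↦ ‖x‖ ^ c :=
    .of_forall fun x ↦ Real.rpow_nonneg (norm_nonneg x) c
  have hO := ((hu.rpow hP (hnonneg _)).mul (hv.rpow hQ (hnonneg _))).mul
    (Asymptotics.isBigO_refl (fun x ↦ ‖x‖ ^ α) (cocompact E))
  refine tendsto_zero_of_isBigO_rpow_neg (sub_pos.2 hα) (hO.congr' .rfl ?_)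
  filter_upwards [(tendsto_norm_cocompact_atTop (E := E)).eventually_gt_atTop 0] with x hx
  rw [← Real.rpow_mul hx.le, ← Real.rpow_mul hx.le, ← Real.rpow_add hx, ← Real.rpow_add hx]
  ring_nf

lemma tendsto_sum_rpowMulRpowBound_mul_norm_rpow {ι : Type*} [Fintype ι] {p q : ι → ℝ}
    (hu : u =O[cocompact E] fun x ↦ ‖x‖ ^ (-a)) (hv : v =O[cocompact E] fun x ↦ ‖x‖ ^ (-b))
    (hp : ∀ i, 1 ≤ p i) (hq : ∀ i, 1 ≤ q i) (hpq : ∀ i, α + max a b < a * p i + b * q i) :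
    Tendsto (fun x ↦ (∑ i, rpowMulRpowBound (p i) (q i) (u x) (v x)) * ‖x‖ ^ α) (cocompact E)
      (𝓝 0) := by
  have hterm (i : ι) :
      Tendsto (fun x ↦ rpowMulRpowBound (p i) (q i) (u x) (v x) * ‖x‖ ^ α) (cocompact E) (𝓝 0) := by
    have hpi := hp i
    have hqi := hq i
    have hderiv_left := (tendsto_rpow_mul_rpow_mul_norm_rpow (α := α) hu hv (sub_nonneg.2 hpi)
      (zero_le_one.trans hqi) (by linarith [hpq i, le_max_left a b])).const_mul (p i)
    have hderiv_right := (tendsto_rpow_mul_rpow_mul_norm_rpow (α := α) hu hv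
      (zero_le_one.trans hpi) (sub_nonneg.2 hqi)
      (by linarith [hpq i, le_max_right a b])).const_mul (q i)
    simpa only [rpowMulRpowBound, add_mul, mul_assoc, mul_zero, add_zero]
      using hderiv_left.add hderiv_right
  simpa only [Finset.sum_mul, Finset.sum_const_zero]
    using tendsto_finsetSum Finset.univ fun i _ ↦ hterm i

lemma isCooperativeSolution_sum_rpow_mul_rpow {ι : Type*} [Fintype ι] [Nonempty ι] {n : ℕ} {C : ℝ}
    {u v : EuclideanSpace ℝ (Fin n) → ℝ} {p q : ι → ℝ} (ha : 0 < a) (hp : ∀ i, 1 ≤ p i)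
    (hq : ∀ i, 1 ≤ q i) (hu : Continuous u) (hu_pos : ∀ x, 0 < u x)
    (hequ : IsFracLap n α C u fun x ↦ ∑ i, u x ^ p i * v x ^ q i)
    (hu_decay : u =O[cocompact _] fun x ↦ ‖x‖ ^ (-a))
    (hv_decay : v =O[cocompact _] fun x ↦ ‖x‖ ^ (-b))
    (hpq : ∀ i, α + max a b < a * p i + b * q i) :
    IsCooperativeSolution n α C (fun s t ↦ ∑ i, s ^ p i * t ^ q i)
      (fun s t ↦ ∑ i, rpowMulRpowBound (p i) (q i) s t) u v where
  cooperativeBound := .sum fun i ↦ cooperativeBound_rpow_mul_rpow (hp i) (hq i)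
  continuous := hu
  pos := hu_pos
  tendsto_zero := tendsto_zero_of_isBigO_rpow_neg ha hu_decay
  isFracLap := hequ
  tendsto_mul_rpow := tendsto_sum_rpowMulRpowBound_mul_norm_rpow hu_decay hv_decay hp hq hpq

theorem radial_symmetry_fractional_schrodinger_general {ι κ : Type*} [Fintype ι] [Nonempty ι]
    [Fintype κ] [Nonempty κ] {n : ℕ} {C : ℝ} {p q : ι → ℝ} {r s : κ → ℝ}
    {u v : EuclideanSpace ℝ (Fin n) → ℝ} (hα : 0 < α) (hC : 0 < C) (ha : 0 < a) (hb : 0 < b)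
    (hp : ∀ i, 1 ≤ p i) (hq : ∀ i, 1 ≤ q i) (hr : ∀ j, 1 ≤ r j) (hs : ∀ j, 1 ≤ s j)
    (hu : Continuous u) (hv : Continuous v) (hu_pos : ∀ x, 0 < u x) (hv_pos : ∀ x, 0 < v x)
    (hequ : IsFracLap n α C u fun x ↦ ∑ i, u x ^ p i * v x ^ q i)
    (heqv : IsFracLap n α C v fun x ↦ ∑ j, u x ^ r j * v x ^ s j)
    (hu_decay : u =O[cocompact _] fun x ↦ ‖x‖ ^ (-a))
    (hv_decay : v =O[cocompact _] fun x ↦ ‖x‖ ^ (-b))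
    (hpq : ∀ i, α + max a b < a * p i + b * q i) (hrs : ∀ j, α + max a b < a * r j + b * s j) :
    ∃ x₀, ∀ x y, ‖x - x₀‖ = ‖y - x₀‖ → u x = u y ∧ v x = v y := by
  simp only [mul_comm (u _ ^ r _)] at heqv
  have hsolu := isCooperativeSolution_sum_rpow_mul_rpow ha hp hq hu hu_pos hequ hu_decay hv_decay
    hpq
  have hsolv := isCooperativeSolution_sum_rpow_mul_rpow hb hs hr hv hv_pos heqv hv_decay hu_decay
    fun j ↦ by rw [max_comm, add_comm (b * s j)]; exact hrs j
  exact hsolu.exists_radial_center hsolv hα hC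

lemma isBigO_cocompact_of_exists_forall_norm_lt {g : E → ℝ} (hu : ∀ x, 0 ≤ u x)
    (h : ∃ R : ℝ, ∀ x, R < ‖x‖ → u x ≤ g x) : u =O[cocompact E] g := by
  obtain ⟨R, hR⟩ := h
  refine .of_norm_eventuallyLE ?_
  filter_upwards [(tendsto_norm_cocompact_atTop (E := E)).eventually_gt_atTop R] with x hx
  rw [Real.norm_of_nonneg (hu x)]
  exact hR x hx

lemma add_max_lt_of_lt_inf' {ι : Type*} [Fintype ι] [Nonempty ι] {p q : ι → ℝ} (ha : 0 ≤ a)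
    (hb : 0 ≤ b)
    (hlt_a : α < a * Finset.univ.inf' Finset.univ_nonempty p +
      b * Finset.univ.inf' Finset.univ_nonempty q - a)
    (hlt_b : α < a * Finset.univ.inf' Finset.univ_nonempty p +
      b * Finset.univ.inf' Finset.univ_nonempty q - b) (i : ι) :
    α + max a b < a * p i + b * q i := by
  have hp := mul_le_mul_of_nonneg_left (Finset.inf'_le p (Finset.mem_univ i)) ha
  have hq := mul_le_mul_of_nonneg_left (Finset.inf'_le q (Finset.mem_univ i)) hb
  rcases max_choice a b with h | h <;> rw [h] <;> linarith

end PowerNonlinearity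

end

/-- Radial symmetry for the fractional Schrödinger system (Corollary 1.1). -/
theorem radial_symmetry_fractional_schrodinger {n N : ℕ} [NeZero n] (α C a b : ℝ)
    (hα : α ∈ Ioo (0 : ℝ) 2) (hC : 0 < C) (ha : 0 < a) (hb : 0 < b)
    (p q r s : Fin (N + 1) → ℝ)
    (hp : ∀ i, 1 ≤ p i) (hq : ∀ i, 1 ≤ q i) (hr : ∀ i, 1 ≤ r i) (hs : ∀ i, 1 ≤ s i)
    (u v : EuclideanSpace ℝ (Fin n) → ℝ)
    (hupos : ∀ x, 0 < u x) (hvpos : ∀ x, 0 < v x)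
    (huL : MemLalpha n α u) (hvL : MemLalpha n α v)
    (huC : C11loc u) (hvC : C11loc v)
    (hequ : IsFracLap n α C u (fun x => ∑ i, u x ^ p i * v x ^ q i))
    (heqv : IsFracLap n α C v (fun x => ∑ i, u x ^ r i * v x ^ s i))
    -- (i) decay of the solution at infinity
    (hdecu : ∃ R : ℝ, ∀ x, R < ‖x‖ → u x ≤ ‖x‖ ^ (-a))
    (hdecv : ∃ R : ℝ, ∀ x, R < ‖x‖ → v x ≤ ‖x‖ ^ (-b))
    -- (v), with p = min pᵢ, q = min qᵢ, r = min rᵢ, s = min sᵢ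
    (hv5 : α < a * (Finset.univ.inf' Finset.univ_nonempty p)
              + b * (Finset.univ.inf' Finset.univ_nonempty q) - a ∧
           α < a * (Finset.univ.inf' Finset.univ_nonempty p)
              + b * (Finset.univ.inf' Finset.univ_nonempty q) - b ∧
           α < a * (Finset.univ.inf' Finset.univ_nonempty r)
              + b * (Finset.univ.inf' Finset.univ_nonempty s) - a ∧
           α < a * (Finset.univ.inf' Finset.univ_nonempty r)
              + b * (Finset.univ.inf' Finset.univ_nonempty s) - b) :
    ∃ x₀ : EuclideanSpace ℝ (Fin n), ∀ x y : EuclideanSpace ℝ (Fin n),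
      ‖x - x₀‖ = ‖y - x₀‖ → u x = u y ∧ v x = v y :=
  radial_symmetry_fractional_schrodinger_general hα.1 hC ha hb hp hq hr hs huC.1.continuous
    hvC.1.continuous hupos hvpos hequ heqv
    (isBigO_cocompact_of_exists_forall_norm_lt (fun x ↦ (hupos x).le) hdecu)
    (isBigO_cocompact_of_exists_forall_norm_lt (fun x ↦ (hvpos x).le) hdecv)
    (add_max_lt_of_lt_inf' ha.le hb.le hv5.1 hv5.2.1)
    (add_max_lt_of_lt_inf' ha.le hb.le hv5.2.2.1 hv5.2.2.2)
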